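/- For every c > 0 and all x, y ∈ ℍⁿ = {x ∈ ℝⁿ : xₙ > 0} (n ≥ 2), the inequality (1/(1+c))·T(x,y) ≤ |x−y|/(|x−y| + c(xₙ + yₙ)) ≤ max{1, 1/c}·T(x,y) holds, where T(x,y) = |x−y|/√(|x−y|² + 4 xₙ yₙ). -/

import Mathlib

/-!
The only geometric fact about the height `f` above the boundary is that it is positive and
1-Lipschitz. With `d = dist x y`, `a = f x`, `b = f y` and `S = √(d ^ 2 + 4 * a * b)`, this gives
`(a + b) ^ 2 = (a - b) ^ 2 + 4 * a * b ≤ S ^ 2`, so `S` dominates both `d` and `a + b`, while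
always `S ≤ d + (a + b)`. Hence `S` agrees with `d + c * (a + b)` up to the factors `1 + c` and
`max 1 (1 / c)`, and the two quotients with numerator `d` compare accordingly.
-/

section SqrtEstimates

variable {a b c d : ℝ}

theorem le_sqrt_sq_add_four_mul (hab : 0 ≤ a * b) : d ≤ √(d ^ 2 + 4 * a * b) :=
  Real.le_sqrt_of_sq_le (by linarith)

theorem add_le_sqrt_sq_add_four_mul (h : |a - b| ≤ d) : a + b ≤ √(d ^ 2 + 4 * a * b) := by
  have hsq : (a - b) ^ 2 ≤ d ^ 2 := sq_le_sq.mpr (h.trans (le_abs_self d))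
  refine Real.le_sqrt_of_sq_le ?_
  calc (a + b) ^ 2 = (a - b) ^ 2 + 4 * a * b := by ring
    _ ≤ d ^ 2 + 4 * a * b := by gcongr

theorem sqrt_sq_add_four_mul_le (hd : 0 ≤ d) (ha : 0 ≤ a) (hb : 0 ≤ b) :
    √(d ^ 2 + 4 * a * b) ≤ d + (a + b) := by
  refine Real.sqrt_le_iff.mpr ⟨by positivity, ?_⟩
  calc d ^ 2 + 4 * a * b ≤ d ^ 2 + 4 * a * b + ((a - b) ^ 2 + 2 * d * (a + b)) :=
        le_add_of_nonneg_right (by positivity)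
    _ = (d + (a + b)) ^ 2 := by ring

theorem add_mul_add_le_mul_sqrt (hc : 0 ≤ c) (hab : 0 ≤ a * b) (h : |a - b| ≤ d) :
    d + c * (a + b) ≤ (1 + c) * √(d ^ 2 + 4 * a * b) :=
  calc d + c * (a + b) ≤ √(d ^ 2 + 4 * a * b) + c * √(d ^ 2 + 4 * a * b) := by
        gcongr
        · exact le_sqrt_sq_add_four_mul hab
        · exact add_le_sqrt_sq_add_four_mul h
    _ = (1 + c) * √(d ^ 2 + 4 * a * b) := by ring

theorem add_le_max_mul_add_mul {s : ℝ} (hc : 0 < c) (hd : 0 ≤ d) (hs : 0 ≤ s) :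
    d + s ≤ max 1 (1 / c) * (d + c * s) :=
  calc d + s = 1 * d + 1 / c * (c * s) := by field_simp
    _ ≤ max 1 (1 / c) * d + max 1 (1 / c) * (c * s) := by
        gcongr
        · exact le_max_left 1 (1 / c)
        · exact le_max_right 1 (1 / c)
    _ = max 1 (1 / c) * (d + c * s) := by ring

theorem one_div_mul_div_sqrt_le_div (hc : 0 < c) (ha : 0 < a) (hb : 0 < b) (h : |a - b| ≤ d) :
    1 / (1 + c) * (d / √(d ^ 2 + 4 * a * b)) ≤ d / (d + c * (a + b)) := by
  have hd : 0 ≤ d := (abs_nonneg _).trans h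
  calc 1 / (1 + c) * (d / √(d ^ 2 + 4 * a * b)) = d / ((1 + c) * √(d ^ 2 + 4 * a * b)) := by
        rw [div_mul_div_comm, one_mul]
    _ ≤ d / (d + c * (a + b)) :=
        div_le_div_of_nonneg_left hd (by positivity)
          (add_mul_add_le_mul_sqrt hc.le (mul_pos ha hb).le h)

theorem div_le_max_mul_div_sqrt (hc : 0 < c) (hd : 0 ≤ d) (ha : 0 < a) (hb : 0 < b) :
    d / (d + c * (a + b)) ≤ max 1 (1 / c) * (d / √(d ^ 2 + 4 * a * b)) := by
  have hS : √(d ^ 2 + 4 * a * b) ≤ max 1 (1 / c) * (d + c * (a + b)) :=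
    (sqrt_sq_add_four_mul_le hd ha.le hb.le).trans (add_le_max_mul_add_mul hc hd (by positivity))
  rw [← mul_div_assoc, div_le_div_iff₀ (by positivity) (by positivity)]
  calc d * √(d ^ 2 + 4 * a * b) ≤ d * (max 1 (1 / c) * (d + c * (a + b))) := by gcongr
    _ = max 1 (1 / c) * d * (d + c * (a + b)) := by ring

end SqrtEstimates

theorem stmt11_general {X : Type*} [PseudoMetricSpace X] {f : X → ℝ} (hf : LipschitzWith 1 f)
    {c : ℝ} (hc : 0 < c) {x y : X} (hx : 0 < f x) (hy : 0 < f y) :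
    1 / (1 + c) * (dist x y / √(dist x y ^ 2 + 4 * f x * f y)) ≤
        dist x y / (dist x y + c * (f x + f y)) ∧
      dist x y / (dist x y + c * (f x + f y)) ≤
        max 1 (1 / c) * (dist x y / √(dist x y ^ 2 + 4 * f x * f y)) := by
  have hxy : |f x - f y| ≤ dist x y := by
    simpa only [Real.dist_eq, NNReal.coe_one, one_mul] using hf.dist_le_mul x y
  exact ⟨one_div_mul_div_sqrt_le_div hc hx hy hxy, div_le_max_mul_div_sqrt hc dist_nonneg hx hy⟩

theorem lipschitzWith_piLp_apply {ι : Type*} [Fintype ι] {p : ENNReal} [Fact (1 ≤ p)]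
    {β : ι → Type*} [∀ i, PseudoEMetricSpace (β i)] (i : ι) :
    LipschitzWith 1 fun x : PiLp p β ↦ x i := by
  simpa only [one_mul, Function.comp_def, Function.eval] using
    (LipschitzWith.eval i).comp (PiLp.lipschitzWith_ofLp p β)

theorem stmt11 (n : ℕ) (hn : 2 ≤ n) (c : ℝ) (hc : 0 < c)
    (x y : EuclideanSpace ℝ (Fin n))
    (hx : 0 < x ⟨n - 1, by omega⟩) (hy : 0 < y ⟨n - 1, by omega⟩) :
    (1 / (1 + c)) *
        (dist x y / Real.sqrt (dist x y ^ 2 + 4 * x ⟨n - 1, by omega⟩ * y ⟨n - 1, by omega⟩)) ≤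
      dist x y / (dist x y + c * (x ⟨n - 1, by omega⟩ + y ⟨n - 1, by omega⟩)) ∧
    dist x y / (dist x y + c * (x ⟨n - 1, by omega⟩ + y ⟨n - 1, by omega⟩)) ≤
      max 1 (1 / c) *
        (dist x y / Real.sqrt (dist x y ^ 2 + 4 * x ⟨n - 1, by omega⟩ * y ⟨n - 1, by omega⟩)) :=
  stmt11_general (f := fun z : EuclideanSpace ℝ (Fin n) ↦ z ⟨n - 1, by omega⟩)
    (lipschitzWith_piLp_apply _) hc hx hy
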